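/- (Johnson–Lindenstrauss, Dasgupta–Gupta version) For any real 0 < ε < 1 and any integer n ≥ 1, let k be a positive integer such that k ≥ 4·(ε²/2 − ε³/3)^{−1}·ln n. Then for any integer d ≥ 1 and any set V of n points in ℝ^d, there exists a map f : ℝ^d → ℝ^k such that for all u, v ∈ V, (1 − ε)·‖u − v‖² ≤ ‖f(u) − f(v)‖² ≤ (1 + ε)·‖u − v‖². -/

import Mathlib

/-!
Project onto `k` independent standard Gaussian vectors and rescale by `1 / √k`. The squared norm of
the image of a vector `x` is then `‖x‖² / k` times a sum of squares of `k` independent standard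
Gaussians. Chernoff's method with the exact moment generating function of a squared Gaussian and
`log (1 + δ) ≤ δ - δ² / 2 + δ³ / 3` shows that it leaves `[(1 - ε)‖x‖², (1 + ε)‖x‖²]` with
probability at most `2 exp (-k (ε² / 2 - ε³ / 3) / 2) ≤ 2 / n²`. There are fewer than `n² / 2`
unordered pairs of points, so some choice of the Gaussian vectors is good for all differences at
once. In infinite dimension, first project orthogonally onto the span of the points.
-/

open MeasureTheory ProbabilityTheory Real
open scoped NNReal InnerProductSpace Finset

lemma log_one_add_le_cubic {δ : ℝ} (hδ : -1 < δ) : log (1 + δ) ≤ δ - δ ^ 2 / 2 + δ ^ 3 / 3 := by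
  let gap : ℝ → ℝ := fun y ↦ y - y ^ 2 / 2 + y ^ 3 / 3 - log (1 + y)
  have hasDerivAt_gap {y : ℝ} (hy : -1 < y) : HasDerivAt gap (y ^ 3 / (1 + y)) y := by
    have hy' : 1 + y ≠ 0 := by linarith
    refine HasDerivAt.congr_deriv
      ((((hasDerivAt_id y).sub ((hasDerivAt_pow 2 y).div_const 2)).add
        ((hasDerivAt_pow 3 y).div_const 3)).sub (((hasDerivAt_id y).const_add 1).log hy')) ?_
    simp only [id_eq]
    push_cast
    field_simp
    ring
  have isMinOn_gap : IsMinOn gap (Set.Ioi (-1)) 0 := by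
    refine isMinOn_Ioi_of_deriv (hasDerivAt_gap (by norm_num)).continuousAt
      (fun y hy ↦ (hasDerivAt_gap hy.1).differentiableAt.differentiableWithinAt)
      (fun y hy ↦
        (hasDerivAt_gap (neg_one_lt_zero.trans hy)).differentiableAt.differentiableWithinAt)
      (fun y hy ↦ ?_) (fun y hy ↦ ?_)
    · rw [(hasDerivAt_gap hy.1).deriv]
      exact div_nonpos_of_nonpos_of_nonneg (Odd.pow_nonpos (by decide) hy.2.le) (by linarith [hy.1])
    · have hy : 0 < y := hy
      rw [(hasDerivAt_gap (by linarith)).deriv]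
      positivity
  have gap_zero : gap 0 = 0 := by simp [gap]
  have gap_nonneg : gap 0 ≤ gap δ := isMinOn_gap hδ
  exact sub_nonneg.1 (gap_zero ▸ gap_nonneg)

section GaussianSumOfSquares

lemma mgf_sq_gaussianReal {v : ℝ≥0} {t : ℝ} (ht : 2 * t * v < 1) :
    mgf (fun z ↦ z ^ 2) (gaussianReal 0 v) t = (√(1 - 2 * t * v))⁻¹ := by
  rcases eq_or_ne v 0 with rfl | hv
  · simp [mgf]
  have : 0 < 1 - 2 * t * v := by linarith
  have density_mul_exp (z : ℝ) : gaussianPDFReal 0 v z • exp (t * z ^ 2)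
      = (√(2 * π * v))⁻¹ * exp (-((1 - 2 * t * v) / (2 * v)) * z ^ 2) := by
    rw [gaussianPDFReal, smul_eq_mul, mul_assoc, ← exp_add]
    congr 2
    field_simp
    ring
  rw [mgf, integral_gaussianReal_eq_integral_smul hv]
  simp_rw [density_mul_exp]
  rw [integral_const_mul, integral_gaussian, ← sqrt_inv, ← sqrt_mul (by positivity), ← sqrt_inv]
  congr 1
  field_simp

variable {Ω ι : Type*} {mΩ : MeasurableSpace Ω} {P : Measure Ω} [Fintype ι] {X : ι → Ω → ℝ}
  {v : ℝ≥0} {t δ ε : ℝ}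

lemma mgf_sum_sq_of_hasLaw_gaussianReal (hX : ∀ i, HasLaw (X i) (gaussianReal 0 v) P)
    (hindep : iIndepFun X P) (ht : 2 * t * v < 1) :
    mgf (fun ω ↦ ∑ i, X i ω ^ 2) P t = (√(1 - 2 * t * v))⁻¹ ^ Fintype.card ι := by
  have hsq : iIndepFun (fun i ω ↦ X i ω ^ 2) P :=
    hindep.comp (fun _ z ↦ z ^ 2) fun _ ↦ by fun_prop
  have mgf_sq (i : ι) : mgf (fun ω ↦ X i ω ^ 2) P t = (√(1 - 2 * t * v))⁻¹ := by
    rw [← mgf_sq_gaussianReal ht, ← (hX i).map_eq, mgf_map (hX i).aemeasurable (by fun_prop)]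
    rfl
  have hsum := hsq.mgf_sum₀ (t := t) (fun i ↦ (hX i).aemeasurable.pow_const 2) Finset.univ
  simp only [mgf_sq, Finset.prod_const, Finset.card_univ] at hsum
  rw [← hsum]
  congr 1
  ext ω
  simp

lemma integrable_exp_mul_sum_sq_of_hasLaw_gaussianReal
    (hX : ∀ i, HasLaw (X i) (gaussianReal 0 v) P) (hindep : iIndepFun X P)
    (ht : 2 * t * v < 1) :
    Integrable (fun ω ↦ exp (t * ∑ i, X i ω ^ 2)) P := by
  have := hindep.isProbabilityMeasure
  have : 0 < 1 - 2 * t * v := by linarith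
  rw [← mgf_pos_iff, mgf_sum_sq_of_hasLaw_gaussianReal hX hindep ht]
  positivity

/-- The parameter `t` minimising the Chernoff bound `exp (-t (1 + δ) k v) (1 - 2 t v) ^ (-k / 2)`
for a sum of squares of `k` independent centred Gaussians of variance `v` to deviate from its mean
`k v` by the factor `1 + δ`. It has the sign of `δ`, so that it serves both tails. -/
noncomputable def chernoffParam (δ : ℝ) (v : ℝ≥0) : ℝ := δ / (2 * (1 + δ) * v)

lemma one_sub_two_mul_chernoffParam_mul (hv : v ≠ 0) (hδ : -1 < δ) :
    1 - 2 * chernoffParam δ v * v = (1 + δ)⁻¹ := by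
  have hδ' : 1 + δ ≠ 0 := by linarith
  have hv' : (v : ℝ) ≠ 0 := by exact_mod_cast hv
  rw [chernoffParam]
  field_simp
  ring

lemma two_mul_chernoffParam_mul_lt_one (hv : v ≠ 0) (hδ : -1 < δ) :
    2 * chernoffParam δ v * v < 1 := by
  have : 0 < (1 + δ)⁻¹ := inv_pos.2 (by linarith)
  linarith [one_sub_two_mul_chernoffParam_mul hv hδ]

lemma exp_mul_mgf_sum_sq_chernoffParam (hX : ∀ i, HasLaw (X i) (gaussianReal 0 v) P)
    (hindep : iIndepFun X P) (hv : v ≠ 0) (hδ : -1 < δ) :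
    exp (-chernoffParam δ v * ((1 + δ) * (Fintype.card ι * v))) *
        mgf (fun ω ↦ ∑ i, X i ω ^ 2) P (chernoffParam δ v)
      = exp (Fintype.card ι / 2 * (log (1 + δ) - δ)) := by
  have hδ' : 0 < 1 + δ := by linarith
  have hv' : (v : ℝ) ≠ 0 := by exact_mod_cast hv
  have sqrt_eq_exp : √(1 + δ) = exp (log (1 + δ) / 2) := by rw [exp_half, exp_log hδ']
  rw [mgf_sum_sq_of_hasLaw_gaussianReal hX hindep (two_mul_chernoffParam_mul_lt_one hv hδ),
    one_sub_two_mul_chernoffParam_mul hv hδ, sqrt_inv, inv_inv, sqrt_eq_exp, ← exp_nat_mul,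
    ← exp_add, chernoffParam]
  congr 1
  field_simp
  ring

lemma measureReal_le_sum_sq_le_of_hasLaw_gaussianReal
    (hX : ∀ i, HasLaw (X i) (gaussianReal 0 v) P) (hindep : iIndepFun X P) (hv : v ≠ 0)
    (hδ : 0 ≤ δ) :
    P.real {ω | (1 + δ) * (Fintype.card ι * v) ≤ ∑ i, X i ω ^ 2}
      ≤ exp (Fintype.card ι / 2 * (log (1 + δ) - δ)) := by
  have := hindep.isProbabilityMeasure
  have hδ' : -1 < δ := by linarith
  have param_nonneg : 0 ≤ chernoffParam δ v := by
    rw [chernoffParam]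
    positivity
  rw [← exp_mul_mgf_sum_sq_chernoffParam hX hindep hv hδ']
  exact measure_ge_le_exp_mul_mgf _ param_nonneg
    (integrable_exp_mul_sum_sq_of_hasLaw_gaussianReal hX hindep
      (two_mul_chernoffParam_mul_lt_one hv hδ'))

lemma measureReal_sum_sq_le_le_of_hasLaw_gaussianReal
    (hX : ∀ i, HasLaw (X i) (gaussianReal 0 v) P) (hindep : iIndepFun X P) (hv : v ≠ 0)
    (hδ : -1 < δ) (hδ0 : δ ≤ 0) :
    P.real {ω | ∑ i, X i ω ^ 2 ≤ (1 + δ) * (Fintype.card ι * v)}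
      ≤ exp (Fintype.card ι / 2 * (log (1 + δ) - δ)) := by
  have := hindep.isProbabilityMeasure
  have param_nonpos : chernoffParam δ v ≤ 0 := by
    have : 0 < 1 + δ := by linarith
    exact div_nonpos_of_nonpos_of_nonneg hδ0 (by positivity)
  rw [← exp_mul_mgf_sum_sq_chernoffParam hX hindep hv hδ]
  exact measure_le_le_exp_mul_mgf _ param_nonpos
    (integrable_exp_mul_sum_sq_of_hasLaw_gaussianReal hX hindep
      (two_mul_chernoffParam_mul_lt_one hv hδ))

lemma measureReal_sum_sq_notMem_Ioo_le_of_hasLaw_gaussianReal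
    (hX : ∀ i, HasLaw (X i) (gaussianReal 0 v) P) (hindep : iIndepFun X P) (hv : v ≠ 0)
    (hε0 : 0 ≤ ε) (hε1 : ε < 1) :
    P.real {ω | ∑ i, X i ω ^ 2 ∉
        Set.Ioo ((1 - ε) * (Fintype.card ι * v)) ((1 + ε) * (Fintype.card ι * v))}
      ≤ 2 * exp (-(Fintype.card ι / 2 * (ε ^ 2 / 2 - ε ^ 3 / 3))) := by
  have := hindep.isProbabilityMeasure
  have upper_rate : log (1 + ε) - ε ≤ -(ε ^ 2 / 2 - ε ^ 3 / 3) := by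
    linarith [log_one_add_le_cubic (by linarith : -1 < ε)]
  have lower_rate : log (1 + -ε) - -ε ≤ -(ε ^ 2 / 2 - ε ^ 3 / 3) := by
    have : 0 ≤ ε ^ 3 := by positivity
    linarith [log_one_add_le_cubic (by linarith : -1 < -ε), neg_sq ε,
      Odd.neg_pow (by decide : Odd 3) ε]
  have notMem_Ioo_eq : {ω | ∑ i, X i ω ^ 2 ∉
        Set.Ioo ((1 - ε) * (Fintype.card ι * v)) ((1 + ε) * (Fintype.card ι * v))}
      = {ω | ∑ i, X i ω ^ 2 ≤ (1 + -ε) * (Fintype.card ι * v)} ∪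
        {ω | (1 + ε) * (Fintype.card ι * v) ≤ ∑ i, X i ω ^ 2} := by
    ext ω
    simp only [Set.mem_Ioo, not_and_or, not_lt, Set.mem_ofPred_eq, Set.mem_union, sub_eq_add_neg]
  rw [notMem_Ioo_eq, two_mul, ← mul_neg]
  refine (measureReal_union_le _ _).trans (add_le_add ?_ ?_)
  · refine (measureReal_sum_sq_le_le_of_hasLaw_gaussianReal hX hindep hv
      (by linarith) (by linarith)).trans ?_
    gcongr
  · refine (measureReal_le_sum_sq_le_of_hasLaw_gaussianReal hX hindep hv hε0).trans ?_
    gcongr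

end GaussianSumOfSquares

section NormalizedInnerMap

variable {ι E : Type*} [Fintype ι] [NormedAddCommGroup E] [InnerProductSpace ℝ E]

/-- The linear map `x ↦ (⟪g i, x⟫ / √(card ι))ᵢ`. For independent standard Gaussian vectors `g i` it
is the random projection of the Johnson–Lindenstrauss lemma, which preserves squared norms in
expectation. For empty `ι` it is the zero map into a trivial space. -/
noncomputable def normalizedInnerMap (g : ι → E) : E →ₗ[ℝ] EuclideanSpace ℝ ι :=
  (√(Fintype.card ι))⁻¹ •
    ((WithLp.linearEquiv 2 ℝ (ι → ℝ)).symm.toLinearMap ∘ₗ LinearMap.pi fun i ↦ innerₛₗ ℝ (g i))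

lemma norm_normalizedInnerMap_sq (g : ι → E) (x : E) :
    ‖normalizedInnerMap g x‖ ^ 2 = (∑ i, ⟪g i, x⟫_ℝ ^ 2) / Fintype.card ι := by
  simp [normalizedInnerMap, norm_smul, mul_pow, EuclideanSpace.real_norm_sq_eq, div_eq_inv_mul]

variable [FiniteDimensional ℝ E] [MeasurableSpace E] [BorelSpace E]

lemma hasLaw_inner_stdGaussian (x : E) :
    HasLaw (fun g ↦ ⟪g, x⟫_ℝ) (gaussianReal 0 (‖x‖₊ ^ 2)) (stdGaussian E) where
  map_eq := by
    simp_rw [real_inner_comm x]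
    have h := IsGaussian.map_eq_gaussianReal (μ := stdGaussian E) (innerSL ℝ x)
    rw [integral_strongDual_stdGaussian, variance_dual_stdGaussian, innerSL_apply_norm] at h
    have toNNReal_norm_sq : (‖x‖ ^ 2).toNNReal = ‖x‖₊ ^ 2 := by
      rw [toNNReal_pow (norm_nonneg x), norm_toNNReal]
    rwa [toNNReal_norm_sq] at h

lemma measureReal_norm_normalizedInnerMap_sq_notMem_Icc_le {x : E} (hx : x ≠ 0) {ε : ℝ}
    (hε0 : 0 ≤ ε) (hε1 : ε < 1) :
    (Measure.pi fun _ : ι ↦ stdGaussian E).real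
        {g | ‖normalizedInnerMap g x‖ ^ 2 ∉ Set.Icc ((1 - ε) * ‖x‖ ^ 2) ((1 + ε) * ‖x‖ ^ 2)}
      ≤ 2 * exp (-(Fintype.card ι / 2 * (ε ^ 2 / 2 - ε ^ 3 / 3))) := by
  have hlaw (i : ι) : HasLaw (fun g : ι → E ↦ ⟪g i, x⟫_ℝ) (gaussianReal 0 (‖x‖₊ ^ 2))
      (Measure.pi fun _ ↦ stdGaussian E) :=
    (hasLaw_inner_stdGaussian x).comp (measurePreserving_eval (fun _ ↦ stdGaussian E) i).hasLaw
  have hindep : iIndepFun (fun i (g : ι → E) ↦ ⟪g i, x⟫_ℝ) (Measure.pi fun _ ↦ stdGaussian E) :=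
    iIndepFun_pi (X := fun _ y ↦ ⟪y, x⟫_ℝ) fun _ ↦ by fun_prop
  refine le_trans (measureReal_mono fun g ↦ ?_)
    (measureReal_sum_sq_notMem_Ioo_le_of_hasLaw_gaussianReal hlaw hindep (by simpa) hε0 hε1)
  refine mt fun hsum ↦ ?_
  push_cast at hsum
  have card_pos : (0 : ℝ) < Fintype.card ι := by
    refine (Nat.cast_nonneg _).lt_of_ne fun h ↦ ?_
    simp [← h] at hsum
  rw [norm_normalizedInnerMap_sq, Set.mem_Icc, le_div_iff₀ card_pos, div_le_iff₀ card_pos]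
  constructor <;> linarith [hsum.1, hsum.2]

end NormalizedInnerMap

lemma exists_forall_notMem_of_choose_two_mul_lt_one {α Ω : Type*} {mΩ : MeasurableSpace Ω}
    {P : Measure Ω} [IsProbabilityMeasure P] {V : Finset α} {B : α → α → Set Ω} {p : ℝ}
    (hB_symm : ∀ u v, B u v = B v u) (hB : ∀ u ∈ V, ∀ v ∈ V, u ≠ v → P.real (B u v) ≤ p)
    (hp : (#V).choose 2 * p < 1) :
    ∃ ω, ∀ u ∈ V, ∀ v ∈ V, u ≠ v → ω ∉ B u v := by
  classical
  let pairs : Finset (Sym2 α) := V.offDiag.image Sym2.mk.uncurry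
  let bad : Sym2 α → Set Ω := Sym2.lift ⟨B, hB_symm⟩
  have bad_le : ∀ s ∈ pairs, P.real (bad s) ≤ p := by
    simp only [pairs, Finset.forall_mem_image, Finset.mem_offDiag]
    exact fun uv huv ↦ hB _ huv.1 _ huv.2.1 huv.2.2
  have union_lt_one : P.real (⋃ s ∈ pairs, bad s) < 1 := calc
    _ ≤ ∑ s ∈ pairs, P.real (bad s) := measureReal_biUnion_finset_le _ _
    _ ≤ #pairs • p := Finset.sum_le_card_nsmul _ _ _ bad_le
    _ = (#V).choose 2 * p := by rw [Sym2.card_image_offDiag, nsmul_eq_mul]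
    _ < 1 := hp
  obtain ⟨ω, hω⟩ : ∃ ω, ω ∉ ⋃ s ∈ pairs, bad s := by
    refine (Set.ne_univ_iff_exists_notMem _).1 fun h ↦ union_lt_one.ne ?_
    rw [h, probReal_univ]
  refine ⟨ω, fun u hu v hv huv hmem ↦ hω (Set.mem_biUnion (x := s(u, v)) ?_ hmem)⟩
  exact Finset.mem_image_of_mem _ (Finset.mem_offDiag (x := (u, v)).2 ⟨hu, hv, huv⟩)

lemma choose_two_mul_two_mul_exp_neg_lt_one {n : ℕ} {a : ℝ} (ha : 2 * log n ≤ a) :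
    n.choose 2 * (2 * exp (-a)) < 1 := by
  rcases n.eq_zero_or_pos with rfl | hn
  · simp
  have : (1 : ℝ) ≤ n := by exact_mod_cast hn
  calc n.choose 2 * (2 * exp (-a))
      ≤ n.choose 2 * (2 * exp (-(2 * log n))) := by gcongr
    _ = (n - 1) / n := by
      rw [Nat.cast_choose_two, exp_neg, two_mul (log n), exp_add, exp_log (by positivity)]
      field_simp
    _ < 1 := by
      rw [div_lt_one (by positivity)]
      linarith

lemma exists_linearMap_forall_norm_sub_sq_mem_Icc {E : Type*} [NormedAddCommGroup E]
    [InnerProductSpace ℝ E] [FiniteDimensional ℝ E] {ι : Type*} [Fintype ι] {ε : ℝ}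
    (hε0 : 0 ≤ ε) (hε1 : ε < 1) (V : Finset E)
    (hV : 2 * log #V ≤ Fintype.card ι / 2 * (ε ^ 2 / 2 - ε ^ 3 / 3)) :
    ∃ f : E →ₗ[ℝ] EuclideanSpace ℝ ι, ∀ u ∈ V, ∀ v ∈ V,
      ‖f u - f v‖ ^ 2 ∈ Set.Icc ((1 - ε) * ‖u - v‖ ^ 2) ((1 + ε) * ‖u - v‖ ^ 2) := by
  borelize E
  obtain ⟨g, hg⟩ := exists_forall_notMem_of_choose_two_mul_lt_one (V := V)
    (P := Measure.pi fun _ : ι ↦ stdGaussian E)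
    (B := fun u v ↦ {g | ‖normalizedInnerMap g (u - v)‖ ^ 2 ∉
      Set.Icc ((1 - ε) * ‖u - v‖ ^ 2) ((1 + ε) * ‖u - v‖ ^ 2)})
    (fun u v ↦ by simp only [map_sub, norm_sub_rev])
    (fun u _ v _ huv ↦ measureReal_norm_normalizedInnerMap_sq_notMem_Icc_le
      (sub_ne_zero.2 huv) hε0 hε1)
    (choose_two_mul_two_mul_exp_neg_lt_one hV)
  refine ⟨normalizedInnerMap g, fun u hu v hv ↦ ?_⟩
  rcases eq_or_ne u v with rfl | huv
  · simp
  · simpa only [map_sub] using not_not.1 (hg u hu v hv huv)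

theorem johnson_lindenstrauss_dasgupta_gupta_general {E : Type*} [NormedAddCommGroup E]
    [InnerProductSpace ℝ E] {ε : ℝ} (hε0 : 0 < ε) (hε1 : ε < 1) (V : Finset E) {k : ℕ}
    (hk : 4 * (ε ^ 2 / 2 - ε ^ 3 / 3)⁻¹ * log #V ≤ k) :
    ∃ f : E →ₗ[ℝ] EuclideanSpace ℝ (Fin k), ∀ u ∈ V, ∀ v ∈ V,
      (1 - ε) * ‖u - v‖ ^ 2 ≤ ‖f u - f v‖ ^ 2 ∧ ‖f u - f v‖ ^ 2 ≤ (1 + ε) * ‖u - v‖ ^ 2 := by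
  classical
  have rate_pos : 0 < ε ^ 2 / 2 - ε ^ 3 / 3 := by nlinarith [pow_pos hε0 2]
  have two_mul_log_le : 2 * log #V ≤ k / 2 * (ε ^ 2 / 2 - ε ^ 3 / 3) := by
    rw [mul_right_comm, ← div_eq_mul_inv, div_le_iff₀ rate_pos] at hk
    linarith
  let W : Submodule ℝ E := Submodule.span ℝ V
  let proj : E →ₗ[ℝ] W := W.orthogonalProjectionOnto
  have norm_proj_sub {u v : E} (hu : u ∈ V) (hv : v ∈ V) : ‖proj u - proj v‖ = ‖u - v‖ := by
    rw [← map_sub]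
    exact W.norm_orthogonalProjectionOnto_apply
      (sub_mem (Submodule.subset_span hu) (Submodule.subset_span hv))
  have card_image : #(V.image proj) = #V := by
    refine Finset.card_image_of_injOn fun u hu v hv huv ↦ ?_
    rwa [← sub_eq_zero, ← norm_eq_zero, norm_proj_sub hu hv, norm_eq_zero, sub_eq_zero] at huv
  obtain ⟨f, hf⟩ := exists_linearMap_forall_norm_sub_sq_mem_Icc (ι := Fin k) hε0.le hε1
    (V.image proj) (by rwa [card_image, Fintype.card_fin])
  refine ⟨f ∘ₗ proj, fun u hu v hv ↦ ?_⟩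
  rw [← norm_proj_sub hu hv]
  exact hf _ (Finset.mem_image_of_mem _ hu) _ (Finset.mem_image_of_mem _ hv)

/-- Johnson–Lindenstrauss lemma (Dasgupta–Gupta version): for any `0 < ε < 1`
and any integer `n ≥ 1`, if `k` is a positive integer with
`k ≥ 4 (ε²/2 - ε³/3)⁻¹ ln n`, then for any set `V` of `n` points in `ℝ^d`
there is a map `f : ℝ^d → ℝ^k` such that for all `u, v ∈ V`,
`(1-ε)‖u-v‖² ≤ ‖f u - f v‖² ≤ (1+ε)‖u-v‖²`. -/
theorem johnson_lindenstrauss_dasgupta_gupta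
    (ε : ℝ) (hε0 : 0 < ε) (hε1 : ε < 1)
    (n : ℕ) (hn : 1 ≤ n)
    (k : ℕ) (hk : 0 < k)
    (hkn : (k : ℝ) ≥ 4 * (ε ^ 2 / 2 - ε ^ 3 / 3)⁻¹ * Real.log n)
    (d : ℕ) (hd : 1 ≤ d)
    (V : Finset (EuclideanSpace ℝ (Fin d))) (hV : V.card = n) :
    ∃ f : EuclideanSpace ℝ (Fin d) → EuclideanSpace ℝ (Fin k),
      ∀ u ∈ V, ∀ v ∈ V,
        (1 - ε) * ‖u - v‖ ^ 2 ≤ ‖f u - f v‖ ^ 2 ∧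
        ‖f u - f v‖ ^ 2 ≤ (1 + ε) * ‖u - v‖ ^ 2 := by
  obtain ⟨f, hf⟩ := johnson_lindenstrauss_dasgupta_gupta_general hε0 hε1 V (hV ▸ hkn)
  exact ⟨f, hf⟩
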